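/- Let V = ℝ^m with m ≥ 3 and let A ∈ 𝔄(V) be projectively flat, i.e. A = H(Θ) for some bilinear form Θ. Then there exists a smooth torsion-free projectively flat connection ∇ on ℝ^m (i.e. P(R^∇_P) = 0 for every P) whose curvature at the origin equals A; explicitly, the connection ∇^θ with θ = x_i Θ_{ij} dx^j works. -/

import Mathlib

/-!
The connection `∇^θ` with `θ_j(x) = ∑ b, x_b Θ_{bj}` has `∂_i θ_j = Θ_{ij}`. Expanding the curvature
of `Γ_{ij}^k = θ_i δ_j^k + θ_j δ_i^k`, the derivative terms assemble to `H(dθ)`, where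
`dθ` denotes the matrix `∂_i θ_j`, and the quadratic terms to `-H(θ ⊗ θ)`
(`curv_projConn`), so the curvature is `H(Θ - θ ⊗ θ)` everywhere. It is therefore
projectively flat at every point, because `ρ(H(Ψ))_{jk} = Ψ_{kj} - m Ψ_{jk}` (`ricC_HC`) gives
`ρ_s(H(Ψ)) = (1 - m) Ψ_s` and `ρ_a(H(Ψ)) = -(m + 1) Ψ_a`, whence `P(H(Ψ)) = 0` (`PC_HC`).
At the origin `θ` vanishes and the curvature is `H(Θ)`.
-/

noncomputable section

/-- The curvature operator `R_{ijk}{}^l` at `P` of the torsion-free connection on `ℝ^m`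
with Christoffel symbols `Γ`:
`R_{ijk}{}^l = ∂_{x_i}Γ_{jk}{}^l - ∂_{x_j}Γ_{ik}{}^l + Γ_{in}{}^l Γ_{jk}{}^n - Γ_{jn}{}^l Γ_{ik}{}^n`. -/
def curv {m : ℕ} (Γ : (Fin m → ℝ) → Fin m → Fin m → Fin m → ℝ) (P : Fin m → ℝ)
    (i j k l : Fin m) : ℝ :=
  fderiv ℝ (fun x => Γ x j k l) P (Pi.single i 1)
    - fderiv ℝ (fun x => Γ x i k l) P (Pi.single j 1)
    + ∑ n, (Γ P i n l * Γ P j k n - Γ P j n l * Γ P i k n)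

/-- The Ricci tensor `ρ_{jk} = R_{ijk}{}^i` of a curvature tensor given in components. -/
def ricC {m : ℕ} (R : Fin m → Fin m → Fin m → Fin m → ℝ) (j k : Fin m) : ℝ :=
  ∑ i, R i j k i

/-- Components of `H(Θ)(x,y)z = Θ(x,y)z - Θ(y,x)z + Θ(x,z)y - Θ(y,z)x`. -/
def HC {m : ℕ} (Θ : Fin m → Fin m → ℝ) (i j k l : Fin m) : ℝ :=
  Θ i j * (if k = l then 1 else 0) - Θ j i * (if k = l then 1 else 0)
    + Θ i k * (if j = l then 1 else 0) - Θ j k * (if i = l then 1 else 0)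

/-- Components of the Weyl projective curvature operator
`P(A) = A + (1/(m-1)) H(ρ_s(A)) + (1/(m+1)) H(ρ_a(A))`. -/
def PC {m : ℕ} (A : Fin m → Fin m → Fin m → Fin m → ℝ) (i j k l : Fin m) : ℝ :=
  A i j k l
    + ((m : ℝ) - 1)⁻¹ * HC (fun a b => (ricC A a b + ricC A b a) / 2) i j k l
    + ((m : ℝ) + 1)⁻¹ * HC (fun a b => (ricC A a b - ricC A b a) / 2) i j k l

theorem ricC_HC {m : ℕ} (Ψ : Fin m → Fin m → ℝ) (j k : Fin m) :
    ricC (HC Ψ) j k = Ψ k j - m * Ψ j k := by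
  simp [ricC, HC, Finset.sum_add_distrib, Finset.sum_sub_distrib]

theorem PC_HC {m : ℕ} (hm : 2 ≤ m) (Ψ : Fin m → Fin m → ℝ) (i j k l : Fin m) :
    PC (HC Ψ) i j k l = 0 := by
  have h2 : (2 : ℝ) ≤ m := by exact_mod_cast hm
  have h1 : (m : ℝ) - 1 ≠ 0 := by linarith
  have h3 : (m : ℝ) + 1 ≠ 0 := by linarith
  simp only [PC, ricC_HC]
  simp only [HC]
  field_simp
  ring

/-- The linear 1-form `x_i Θ_{ij} dx^j`. -/
def linForm {m : ℕ} (Θ : Fin m → Fin m → ℝ) (x : Fin m → ℝ) (j : Fin m) : ℝ :=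
  ∑ b, x b * Θ b j

/-- The Christoffel symbols `θ_i δ_j^k + θ_j δ_i^k` of the connection `∇^θ`. -/
def projConn {m : ℕ} (θ : (Fin m → ℝ) → Fin m → ℝ) (x : Fin m → ℝ) (i j k : Fin m) : ℝ :=
  θ x i * (if j = k then 1 else 0) + θ x j * (if i = k then 1 else 0)

theorem contDiff_linForm {m : ℕ} (Θ : Fin m → Fin m → ℝ) (j : Fin m) :
    ContDiff ℝ (⊤ : ℕ∞) fun x => linForm Θ x j := by
  unfold linForm
  fun_prop

theorem fderiv_linForm {m : ℕ} (Θ : Fin m → Fin m → ℝ) (P : Fin m → ℝ) (i j : Fin m) :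
    fderiv ℝ (fun x => linForm Θ x j) P (Pi.single i 1) = Θ i j := by
  have h : HasFDerivAt (fun x => linForm Θ x j)
      (∑ b, Θ b j • ContinuousLinearMap.proj (R := ℝ) (φ := fun _ : Fin m => ℝ) b) P := by
    unfold linForm
    exact HasFDerivAt.fun_sum fun b _ => (hasFDerivAt_apply b P).mul_const (Θ b j)
  rw [h.fderiv]
  simp [Pi.single_apply]

/-- The curvature of `∇^θ` is `H(dθ - θ ⊗ θ)`, where `dθ` is the full matrix `∂_i θ_j`. -/
theorem curv_projConn {m : ℕ} (θ : (Fin m → ℝ) → Fin m → ℝ) (P : Fin m → ℝ)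
    (hθ : ∀ j, DifferentiableAt ℝ (fun x => θ x j) P) (i j k l : Fin m) :
    curv (projConn θ) P i j k l =
      HC (fun a b => fderiv ℝ (fun x => θ x b) P (Pi.single a 1) - θ P a * θ P b) i j k l := by
  have hd (i j k l : Fin m) :
      fderiv ℝ (fun x => projConn θ x j k l) P (Pi.single i 1) =
        fderiv ℝ (fun x => θ x j) P (Pi.single i 1) * (if k = l then 1 else 0)
          + fderiv ℝ (fun x => θ x k) P (Pi.single i 1) * (if j = l then 1 else 0) := by
    unfold projConn
    rw [(((hθ j).hasFDerivAt.mul_const _).fun_add ((hθ k).hasFDerivAt.mul_const _)).fderiv]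
    split_ifs <;> simp
  have hq (i j k l : Fin m) : ∑ n, projConn θ P i n l * projConn θ P j k n =
      θ P i * θ P j * (if k = l then 1 else 0) + θ P i * θ P k * (if j = l then 1 else 0)
        + 2 * (θ P j * θ P k) * (if i = l then 1 else 0) := by
    simp only [projConn, mul_add, Finset.sum_add_distrib, mul_ite, mul_one, mul_zero,
      Finset.sum_ite_eq, Finset.mem_univ, if_true]
    split_ifs <;> ring
  rw [curv, hd, hd, Finset.sum_sub_distrib, hq, hq]
  simp only [HC]
  ring

/-- **Theorem 1.7 (1).** A projectively flat generalized algebraic curvature operator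
`A = H(Θ)` on `ℝ^m` (`m ≥ 3`) is geometrically realizable by a smooth torsion-free
projectively flat connection on `ℝ^m` whose curvature at the origin equals `A`. -/
theorem projectively_flat_realization
    (m : ℕ) (hm : 3 ≤ m)
    (A : Fin m → Fin m → Fin m → Fin m → ℝ)
    (hanti : ∀ i j k l, A i j k l = - A j i k l)
    (hbianchi : ∀ i j k l, A i j k l + A j k i l + A k i j l = 0)
    (Θ : Fin m → Fin m → ℝ)
    (hA : ∀ i j k l, A i j k l = HC Θ i j k l) :
    ∃ Γ : (Fin m → ℝ) → Fin m → Fin m → Fin m → ℝ,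
      (∀ i j k, ContDiff ℝ (⊤ : ℕ∞) fun x => Γ x i j k) ∧
      (∀ x i j k, Γ x i j k = Γ x j i k) ∧
      (∀ (P : Fin m → ℝ) (i j k l : Fin m), PC (curv Γ P) i j k l = 0) ∧
      (∀ i j k l, curv Γ 0 i j k l = A i j k l) := by
  have hcurv (P : Fin m → ℝ) : curv (projConn (linForm Θ)) P =
      HC fun a b => Θ a b - linForm Θ P a * linForm Θ P b := by
    funext i j k l
    rw [curv_projConn _ _ fun j =>
      (contDiff_linForm Θ j).differentiable (by simp) P]
    simp only [fderiv_linForm]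
  refine ⟨projConn (linForm Θ), fun i j k => ?_, fun x i j k => ?_, fun P i j k l => ?_,
    fun i j k l => ?_⟩
  · exact ((contDiff_linForm Θ i).mul contDiff_const).add
      ((contDiff_linForm Θ j).mul contDiff_const)
  · exact add_comm _ _
  · rw [hcurv, PC_HC (by omega)]
  · rw [hcurv, hA]
    simp [linForm]
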